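/- The set of critical values of F is a compact subset of the interval [Λ₁, 0]. -/

import Mathlib

/-!
A critical point tested with itself satisfies `[u]_s² = α ∫_Ω |u|^q`, so its energy is
`(1/2 - 1/q) [u]_s² ≤ 0` (`crit_energy`). The energy is bounded below on the admissible class by
the fractional Poincaré inequality and `q < 2` (`EF_bddBelow`), so critical values lie in `[Λ₁, 0]`,
and it remains to see that they form a closed set (`critVals_closed`).

Let `u_n` be critical points whose energies converge. By the energy identity they are bounded in
`[·]_s`, and the embedding into `L²` is compact (`compact_L2`), so a subsequence is Cauchy in `L²`.
Compactness rests on the estimate `avg_est`: the `L²` norm of `w` is bounded by its integrals over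
finitely many small balls covering `Ω`, plus a small multiple of `[w]_s`; a diagonal subsequence makes
all the ball integrals converge. Subtracting the equations of `u_n` and `u_m` and testing with
`u_n - u_m` gives
`[u_n - u_m]_s² = α ∫_Ω (|u_n|^{q-2} u_n - |u_m|^{q-2} u_m) (u_n - u_m)`, which tends to `0` by
`signedPow_est`. So the convergence is strong in the seminorm as well, the equation and the energy
identity pass to the limit, and the limit energy is a critical value.

The seminorm is treated as the `L²(ℝ^N × ℝ^N)` norm of the quotient `gagQuot`.
-/

open MeasureTheory ENNReal Filter

noncomputable section

/-- Euclidean space `ℝ^N`. -/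
abbrev E (N : ℕ) : Type := EuclideanSpace ℝ (Fin N)

/-- The squared Gagliardo seminorm `[u]_s^2`, valued in `[0,∞]`. -/
def gagSq (N : ℕ) (s : ℝ) (u : E N → ℝ) : ℝ≥0∞ :=
  ∫⁻ x : E N, ∫⁻ y : E N,
    ENNReal.ofReal ((u x - u y) ^ 2 / dist x y ^ ((N : ℝ) + 2 * s))

/-- The admissible class `A`: measurable functions vanishing a.e. outside `Ω`,
with finite Gagliardo seminorm and `|u|^q` integrable on `Ω`. -/
def memA (N : ℕ) (s q : ℝ) (Ω : Set (E N)) (u : E N → ℝ) : Prop :=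
  Measurable u ∧ (∀ᵐ x : E N, x ∉ Ω → u x = 0) ∧ gagSq N s u < ⊤ ∧
    IntegrableOn (fun x => |u x| ^ q) Ω

/-- The energy functional `F(u) = (1/2)[u]_s^2 − (α/q)∫_Ω |u|^q`. -/
def EF (N : ℕ) (s q α : ℝ) (Ω : Set (E N)) (u : E N → ℝ) : ℝ :=
  (1 / 2) * (gagSq N s u).toReal - (α / q) * ∫ x in Ω, |u x| ^ q

/-- The ground state level `Λ₁ = inf {F(u) : u ∈ A}`. -/
def Lam1 (N : ℕ) (s q α : ℝ) (Ω : Set (E N)) : ℝ :=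
  sInf {c : ℝ | ∃ u, memA N s q Ω u ∧ EF N s q α Ω u = c}

/-- A critical point of `F`: a weak solution of `(−Δ)^s u = α|u|^{q−2}u` in `Ω`. -/
def IsCritPt (N : ℕ) (s q α : ℝ) (Ω : Set (E N)) (u : E N → ℝ) : Prop :=
  memA N s q Ω u ∧ ∀ ψ : E N → ℝ, memA N s q Ω ψ →
    (∫ x : E N, ∫ y : E N,
        (u x - u y) * (ψ x - ψ y) / dist x y ^ ((N : ℝ) + 2 * s)) =
      α * ∫ x in Ω, |u x| ^ (q - 2) * u x * ψ x

/-- A critical value of `F`. -/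
def IsCritVal (N : ℕ) (s q α : ℝ) (Ω : Set (E N)) (c : ℝ) : Prop :=
  ∃ u, IsCritPt N s q α Ω u ∧ EF N s q α Ω u = c

/-- The first excited level `Λ₂ = inf {Λ > Λ₁ : Λ is a critical value of F}`. -/
def Lam2 (N : ℕ) (s q α : ℝ) (Ω : Set (E N)) : ℝ :=
  sInf {c : ℝ | Lam1 N s q α Ω < c ∧ IsCritVal N s q α Ω c}

/-- The cross term `I(u,v) = ∫∫ u(x)v(y)/|x−y|^{N+2s}` (valued in `[0,∞]`). -/
def crossI (N : ℕ) (s : ℝ) (u v : E N → ℝ) : ℝ≥0∞ :=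
  ∫⁻ x : E N, ∫⁻ y : E N,
    ENNReal.ofReal (u x * v y / dist x y ^ ((N : ℝ) + 2 * s))

/-- The metric of convergence in measure on `Ω`. -/
def d0 (N : ℕ) (Ω : Set (E N)) (u v : E N → ℝ) : ℝ :=
  ∫ x in Ω, min 1 |u x - v x|

/-- The power nonlinearity `Φ(t) = |t|^{m−1} t`. -/
def Phi (m t : ℝ) : ℝ := |t| ^ (m - 1) * t

/-- The nonlinearity `g(t) = |t|^{(m−1)/2} t`. -/
def gfun (m t : ℝ) : ℝ := |t| ^ ((m - 1) / 2) * t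

open Set Topology

/-! ### The Gagliardo quotient and `L²` preliminaries -/

/-- The Gagliardo quotient `(u x - u y) / |x - y|^{(N+2s)/2}`, so that `[u]_s` is its `L²` norm on
`ℝ^N × ℝ^N`. It vanishes on the diagonal. -/
def gagQuot (N : ℕ) (s : ℝ) (u : E N → ℝ) (p : E N × E N) : ℝ :=
  (u p.1 - u p.2) / dist p.1 p.2 ^ (((N : ℝ) + 2 * s) / 2)

lemma gagQuot_mul (N : ℕ) (s : ℝ) (u v : E N → ℝ) (x y : E N) :
    gagQuot N s u (x, y) * gagQuot N s v (x, y)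
      = (u x - u y) * (v x - v y) / dist x y ^ ((N : ℝ) + 2 * s) := by
  have h : dist x y ^ ((N : ℝ) + 2 * s)
      = dist x y ^ (((N : ℝ) + 2 * s) / 2) * dist x y ^ (((N : ℝ) + 2 * s) / 2) := by
    rw [← sq, ← Real.rpow_natCast, ← Real.rpow_mul dist_nonneg]
    congr 1; push_cast; ring
  rw [h, gagQuot, gagQuot, div_mul_div_comm]

lemma gagQuot_sub (N : ℕ) (s : ℝ) (u v : E N → ℝ) :
    gagQuot N s (u - v) = gagQuot N s u - gagQuot N s v := by
  ext p; simp only [gagQuot, Pi.sub_apply]; ring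

lemma measurable_gagQuot {N : ℕ} {s : ℝ} {u : E N → ℝ} (hu : Measurable u) :
    Measurable (gagQuot N s u) := by
  unfold gagQuot; fun_prop

lemma lintegral_gagQuot {N : ℕ} {s : ℝ} {u : E N → ℝ} (hu : Measurable u) :
    ∫⁻ p, ENNReal.ofReal (gagQuot N s u p ^ 2) ∂(volume.prod volume) = gagSq N s u := by
  rw [lintegral_prod _ (by have := measurable_gagQuot (s := s) hu; fun_prop)]
  unfold gagSq
  simp only [sq, gagQuot_mul]

section L2
variable {X : Type*} [MeasurableSpace X] {μ : Measure X} {f g : X → ℝ}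

lemma memLp_two_of_lintegral (hf : Measurable f)
    (h : ∫⁻ x, ENNReal.ofReal (f x ^ 2) ∂μ < ⊤) : MemLp f 2 μ := by
  rw [memLp_two_iff_integrable_sq hf.aestronglyMeasurable]
  refine ⟨by fun_prop, ?_⟩
  rw [hasFiniteIntegral_iff_ofReal (ae_of_all _ fun x => sq_nonneg _)]
  exact h

lemma inner_toLp (hf : MemLp f 2 μ) (hg : MemLp g 2 μ) :
    inner ℝ (hf.toLp f) (hg.toLp g) = ∫ x, f x * g x ∂μ := by
  rw [L2.inner_def]
  refine integral_congr_ae ?_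
  filter_upwards [hf.coeFn_toLp, hg.coeFn_toLp] with x hx hy
  rw [hx, hy]; simp [mul_comm]

lemma norm_toLp_sq (hf : MemLp f 2 μ) : ‖hf.toLp f‖ ^ 2 = ∫ x, f x ^ 2 ∂μ := by
  rw [← real_inner_self_eq_norm_sq, inner_toLp hf hf]
  simp only [sq]

lemma norm_toLp_sq_lintegral (hf : MemLp f 2 μ) :
    ‖hf.toLp f‖ ^ 2 = (∫⁻ x, ENNReal.ofReal (f x ^ 2) ∂μ).toReal := by
  rw [norm_toLp_sq, integral_eq_lintegral_of_nonneg_ae (ae_of_all _ fun x => sq_nonneg _)]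
  exact (hf.integrable_sq).aestronglyMeasurable

lemma integral_abs_mul_le (hf : MemLp f 2 μ) (hg : MemLp g 2 μ) :
    ∫ x, |f x| * |g x| ∂μ ≤ ‖hf.toLp f‖ * ‖hg.toLp g‖ := by
  have h1 := real_inner_le_norm (hf.abs.toLp _) (hg.abs.toLp _)
  rw [inner_toLp] at h1
  have e : ∀ {k : X → ℝ} (hk : MemLp k 2 μ), ‖hk.abs.toLp _‖ = ‖hk.toLp k‖ := by
    intro k hk
    rw [← sq_eq_sq₀ (norm_nonneg _) (norm_nonneg _), norm_toLp_sq, norm_toLp_sq]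
    simp
  rw [e hf, e hg] at h1
  simpa using h1
end L2

/-! ### The power nonlinearity -/

/-- Sublinear powers are at most any positive constant plus a linear term. -/
lemma rpow_le_eps {θ ε : ℝ} (h0 : 0 < θ) (h1 : θ < 1) (hε : 0 < ε) :
    ∃ C, 0 ≤ C ∧ ∀ a, 0 ≤ a → a ^ θ ≤ ε + C * a := by
  refine ⟨(ε ^ (1 / θ)) ^ (θ - 1), by positivity, fun a ha => ?_⟩
  have hp : 0 < ε ^ (1 / θ) := by positivity
  rcases le_total a (ε ^ (1 / θ)) with h | h
  · have := Real.rpow_le_rpow ha h h0.le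
    rw [← Real.rpow_mul hε.le, one_div_mul_cancel h0.ne', Real.rpow_one] at this
    have : 0 ≤ (ε ^ (1 / θ)) ^ (θ - 1) * a := by positivity
    linarith
  · have ha' : 0 < a := hp.trans_le h
    have h2 := Real.rpow_le_rpow_of_nonpos hp h (by linarith : θ - 1 ≤ 0)
    have h3 : a ^ θ = a ^ (θ - 1) * a := by
      rw [← Real.rpow_add_one ha'.ne']; congr 1; ring
    rw [h3]
    nlinarith

/-- Subquadratic powers are at most a constant plus an arbitrarily small multiple of the square. -/
lemma rpow_le_sq {q ε : ℝ} (h0 : 1 < q) (h1 : q < 2) (hε : 0 < ε) :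
    ∃ C, 0 ≤ C ∧ ∀ a, 0 ≤ a → a ^ q ≤ C + ε * a ^ 2 := by
  set K := ε ^ (1 / (q - 2)) with hK
  have hp : 0 < K := by positivity
  refine ⟨K ^ q, by positivity, fun a ha => ?_⟩
  rcases le_total a K with h | h
  · have := Real.rpow_le_rpow ha h (by linarith : 0 ≤ q)
    nlinarith [mul_nonneg hε.le (sq_nonneg a)]
  · have ha' : 0 < a := hp.trans_le h
    have h2 := Real.rpow_le_rpow_of_nonpos hp h (by linarith : q - 2 ≤ 0)
    rw [hK, ← Real.rpow_mul hε.le, one_div_mul_cancel (by linarith), Real.rpow_one] at h2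
    have h3 : a ^ q = a ^ (q - 2) * a ^ 2 := by
      rw [← Real.rpow_natCast, ← Real.rpow_add ha']; congr 1; push_cast; ring
    rw [h3]
    have : 0 ≤ K ^ q := by positivity
    nlinarith [mul_le_mul_of_nonneg_right h2 (sq_nonneg a)]

/-- The nonlinearity `t ↦ |t|^{q-2} t` of the Lane–Emden equation. -/
def signedPow (q t : ℝ) : ℝ := |t| ^ (q - 2) * t

lemma signedPow_neg (q t : ℝ) : signedPow q (-t) = - signedPow q t := by simp [signedPow]

lemma signedPow_nonneg_eq {q t : ℝ} (hq : 1 < q) (ht : 0 ≤ t) : signedPow q t = t ^ (q - 1) := by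
  rcases ht.eq_or_lt with rfl | h
  · simp [signedPow, Real.zero_rpow (by linarith : q - 1 ≠ 0)]
  · rw [signedPow, abs_of_pos h, ← Real.rpow_add_one h.ne']; congr 1; ring

lemma measurable_signedPow (q : ℝ) : Measurable (signedPow q) := by unfold signedPow; fun_prop

/-- `t ↦ |t|^{q-2} t` is Hölder continuous with exponent `q - 1`. -/
lemma signedPow_holder {q : ℝ} (hq : 1 < q) (hq2 : q < 2) (a b : ℝ) :
    |signedPow q a - signedPow q b| ≤ 2 * |a - b| ^ (q - 1) := by
  have h0 : 0 < q - 1 := by linarith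
  have h1 : q - 1 ≤ 1 := by linarith
  have key : ∀ x y : ℝ, 0 ≤ y → y ≤ x → |signedPow q x - signedPow q y| ≤ 2 * |x - y| ^ (q - 1) := by
    intro x y hy hxy
    rw [signedPow_nonneg_eq hq (hy.trans hxy), signedPow_nonneg_eq hq hy, abs_of_nonneg (sub_nonneg.2 hxy)]
    have h2 := Real.rpow_le_rpow hy hxy h0.le
    have h3 := Real.rpow_add_le_add_rpow (sub_nonneg.2 hxy) hy h0.le h1
    have h4 : 0 ≤ (x - y) ^ (q - 1) := Real.rpow_nonneg (sub_nonneg.2 hxy) _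
    rw [sub_add_cancel] at h3
    rw [abs_of_nonneg (sub_nonneg.2 h2)]
    linarith
  have key2 : ∀ x y : ℝ, 0 ≤ y → 0 ≤ x → |signedPow q x - signedPow q (-y)| ≤ 2 * |x + y| ^ (q - 1) := by
    intro x y hy hx
    rw [signedPow_neg, signedPow_nonneg_eq hq hx, signedPow_nonneg_eq hq hy, abs_of_nonneg (add_nonneg hx hy)]
    have h2 := Real.rpow_le_rpow hy (by linarith : y ≤ x + y) h0.le
    have h3 := Real.rpow_le_rpow hx (by linarith : x ≤ x + y) h0.le
    have hx' := Real.rpow_nonneg hx (q - 1)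
    have hy' := Real.rpow_nonneg hy (q - 1)
    rw [abs_of_nonneg (by linarith)]
    linarith
  have key1 : ∀ x y : ℝ, 0 ≤ y → 0 ≤ x → |signedPow q x - signedPow q y| ≤ 2 * |x - y| ^ (q - 1) := by
    intro x y hy hx
    rcases le_total y x with h | h
    · exact key x y hy h
    · rw [abs_sub_comm, abs_sub_comm x]; exact key y x hx h
  rcases le_total 0 a with ha | ha <;> rcases le_total 0 b with hb | hb
  · exact key1 a b hb ha
  · have := key2 a (-b) (by linarith) ha
    rwa [neg_neg, ← sub_eq_add_neg] at this
  · have := key2 b (-a) (by linarith) hb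
    rwa [neg_neg, ← sub_eq_add_neg, abs_sub_comm, abs_sub_comm b] at this
  · have := key1 (-a) (-b) (by linarith) (by linarith)
    rw [signedPow_neg, signedPow_neg, neg_sub_neg, neg_sub_neg] at this
    rwa [abs_sub_comm, abs_sub_comm a]

lemma abs_rpow_eq {q : ℝ} (hq : 1 < q) (t : ℝ) : signedPow q t * t = |t| ^ q := by
  rcases eq_or_ne t 0 with rfl | h
  · simp [signedPow, Real.zero_rpow (by linarith : q ≠ 0)]
  · have h' := abs_pos.2 h
    rw [signedPow, mul_assoc, ← abs_mul_abs_self, ← mul_assoc, ← Real.rpow_add_one h'.ne',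
      ← Real.rpow_add_one h'.ne']
    congr 1; ring

/-! ### Poincaré inequality and the ball-average estimate -/

/-- Fractional Poincaré inequality. Restricting `y` to a ball disjoint from `Ω`, where `u = 0`, already
bounds the inner integral of the seminorm below by a multiple of `u(x)²` for `x ∈ Ω`. -/
lemma poincare {N : ℕ} (hN : 1 ≤ N) {Ω : Set (E N)} (hΩb : Bornology.IsBounded Ω)
    {s : ℝ} (hs : 0 < s) :
    ∃ C : ℝ≥0∞, C ≠ ⊤ ∧ ∀ u : E N → ℝ, Measurable u → (∀ᵐ x : E N, x ∉ Ω → u x = 0) →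
      ∫⁻ x, ENNReal.ofReal (u x ^ 2) ≤ C * gagSq N s u := by
  have : Nonempty (Fin N) := ⟨⟨0, hN⟩⟩
  obtain ⟨R, hR0, hR⟩ := hΩb.subset_ball_lt 0 (0 : E N)
  obtain ⟨z, hz⟩ := exists_norm_eq (E N) (by linarith : 0 ≤ R + 1)
  set a : ℝ := (N : ℝ) + 2 * s with ha
  have ha0 : 0 < a := by positivity
  set M : ℝ := 2 * R + 2 with hM
  set B := Metric.ball z 1 with hB
  have hdisj : ∀ y ∈ B, y ∉ Ω := by
    intro y hy hyΩ
    have h1 : ‖y‖ < R := by simpa using hR hyΩ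
    have h2 : ‖y - z‖ < 1 := by simpa [hB, dist_eq_norm] using hy
    have h3 := norm_sub_norm_le z y
    rw [norm_sub_rev] at h3
    linarith
  have hdist : ∀ x ∈ Ω, ∀ y ∈ B, 0 < dist x y ∧ dist x y ≤ M := by
    intro x hx y hy
    refine ⟨dist_pos.2 fun h => hdisj y hy (h ▸ hx), ?_⟩
    have h1 : ‖x‖ < R := by simpa using hR hx
    have h2 : ‖y - z‖ < 1 := by simpa [hB, dist_eq_norm] using hy
    have h3 := norm_sub_norm_le y z
    have h4 := norm_sub_le x y
    rw [dist_eq_norm]; linarith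
  set c : ℝ≥0∞ := ENNReal.ofReal (1 / M ^ a) * volume B with hc
  have hMa : 0 < M ^ a := by positivity
  have hc0 : c ≠ 0 := by
    refine mul_ne_zero ?_ (Metric.measure_ball_pos _ _ one_pos).ne'
    simpa using hMa
  have hct : c ≠ ⊤ := ENNReal.mul_ne_top ENNReal.ofReal_ne_top measure_ball_lt_top.ne
  refine ⟨c⁻¹, ENNReal.inv_ne_top.2 hc0, fun u hu hu0 => ?_⟩
  rw [← ENNReal.mul_le_iff_le_inv hc0 hct, ← lintegral_const_mul _ (by fun_prop)]
  refine lintegral_mono_ae ?_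
  filter_upwards [hu0] with x hx
  by_cases hxΩ : x ∈ Ω
  · calc c * ENNReal.ofReal (u x ^ 2)
        = ∫⁻ _ in B, ENNReal.ofReal (u x ^ 2 / M ^ a) := by
          rw [setLIntegral_const, hc, mul_right_comm, ← ENNReal.ofReal_mul (by positivity)]
          congr 2; ring
      _ ≤ ∫⁻ y in B, ENNReal.ofReal ((u x - u y) ^ 2 / dist x y ^ a) := by
          refine setLIntegral_mono_ae' Metric.isOpen_ball.measurableSet ?_
          filter_upwards [hu0] with y hy hyB
          rw [hy (hdisj y hyB), sub_zero]
          obtain ⟨h1, h2⟩ := hdist x hxΩ y hyB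
          gcongr
      _ ≤ _ := setLIntegral_le_lintegral _ _
  · simp [hx hxΩ]

/-- Quantitative form of the compact embedding: the `L²` norm of `w` is controlled by finitely many
integrals of `w` over balls of radius `r` covering `Ω`, up to a multiple of the seminorm. The multiple
is of order `r^{2s}` by `coeff_tendsto`. -/
lemma avg_est {N : ℕ} {Ω : Set (E N)} (hΩo : IsOpen Ω)
    (hΩb : Bornology.IsBounded Ω) {s : ℝ} (hs : 0 < s)
    {w : E N → ℝ} (hw : Measurable w) (hw2 : MemLp w 2 volume)
    (hw0 : ∀ᵐ x : E N, x ∉ Ω → w x = 0) (hg : gagSq N s w < ⊤)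
    {r : ℝ} (hr : 0 < r) {ι : Type*} (t : Finset ι) (d : ι → E N)
    (ht : Ω ⊆ ⋃ i ∈ t, Metric.ball (d i) r) :
    volume.real (Metric.ball (0 : E N) r) / 2 * ∫ x, w x ^ 2 ≤
      volume.real Ω * (∑ i ∈ t, 2 / volume.real (Metric.ball (0 : E N) r) *
        (∫ x in Metric.ball (d i) r, w x) ^ 2)
      + (2 * r) ^ ((N : ℝ) + 2 * s) * (gagSq N s w).toReal := by
  set V := volume.real (Metric.ball (0 : E N) r) with hV
  set a : ℝ := (N : ℝ) + 2 * s with ha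
  have ha0 : 0 < a := by positivity
  have hVball : ∀ z : E N, volume.real (Metric.ball z r) = V := fun z =>
    Measure.addHaar_real_ball_center _ z r
  have hVpos : 0 < V :=
    ENNReal.toReal_pos (Metric.measure_ball_pos _ _ hr).ne' measure_ball_lt_top.ne
  set S := ∑ i ∈ t, 2 / V * (∫ x in Metric.ball (d i) r, w x) ^ 2 with hS
  have hS0 : 0 ≤ S := Finset.sum_nonneg fun z _ => by positivity
  have hΩfin : volume Ω ≠ ⊤ := hΩb.measure_lt_top.ne
  -- On the ball `B ∋ x`, expanding `∫_B (w x - w y)²` and dropping `∫_B w²` avoids any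
  -- Cauchy-Schwarz or averaging argument.
  have hpt : ∀ x ∈ Ω, ENNReal.ofReal (V / 2 * w x ^ 2) ≤ ENNReal.ofReal S +
      ENNReal.ofReal ((2 * r) ^ a) *
        ∫⁻ y, ENNReal.ofReal ((w x - w y) ^ 2 / dist x y ^ a) := by
    intro x hx
    obtain ⟨i, hi, hxz⟩ := mem_iUnion₂.1 (ht hx)
    set B := Metric.ball (d i) r with hB
    have : IsFiniteMeasure (volume.restrict B) := ⟨by simpa using measure_ball_lt_top⟩
    have hwB : MemLp w 2 (volume.restrict B) := hw2.restrict B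
    have i1 : Integrable w (volume.restrict B) := hwB.integrable one_le_two
    have i2 : Integrable (fun y => w y ^ 2) (volume.restrict B) := hwB.integrable_sq
    have i3 : Integrable (fun y => (w x - w y) ^ 2) (volume.restrict B) :=
      ((memLp_const (w x)).sub hwB).integrable_sq
    have hexp : ∫ y in B, (w x - w y) ^ 2 =
        V * w x ^ 2 - 2 * w x * (∫ y in B, w y) + ∫ y in B, w y ^ 2 := by
      have : ∀ y, (w x - w y) ^ 2 = w x ^ 2 - 2 * w x * w y + w y ^ 2 := fun y => by ring
      simp only [this]
      have i4 : Integrable (fun y => w x ^ 2 - 2 * w x * w y) (volume.restrict B) :=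
        (integrable_const _).sub (i1.const_mul _)
      rw [integral_add i4 i2,
        integral_sub (integrable_const _) (i1.const_mul _), integral_const_mul,
        setIntegral_const, hVball, smul_eq_mul]
    have hpos : 0 ≤ ∫ y in B, w y ^ 2 := integral_nonneg fun _ => sq_nonneg _
    set m := ∫ y in B, w y with hm
    have hSm : 2 / V * m ^ 2 ≤ S :=
      Finset.single_le_sum (f := fun i => 2 / V * (∫ x in Metric.ball (d i) r, w x) ^ 2)
        (fun z _ => by positivity) hi
    have hreal : V / 2 * w x ^ 2 ≤ S + ∫ y in B, (w x - w y) ^ 2 := by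
      have h1 : 2 * w x * m ≤ V / 2 * w x ^ 2 + 2 / V * m ^ 2 := by
        have : V / 2 * w x ^ 2 + 2 / V * m ^ 2 - 2 * w x * m
            = (V * w x - 2 * m) ^ 2 / (2 * V) := by field_simp; ring
        have : 0 ≤ (V * w x - 2 * m) ^ 2 / (2 * V) := by positivity
        linarith
      linarith
    refine (ENNReal.ofReal_le_ofReal hreal).trans (ENNReal.ofReal_add_le.trans ?_)
    gcongr
    rw [ofReal_integral_eq_lintegral_ofReal i3 (ae_of_all _ fun _ => sq_nonneg _),
      ← lintegral_const_mul _ (by fun_prop)]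
    refine le_trans (setLIntegral_mono' Metric.isOpen_ball.measurableSet fun y hy => ?_)
      (setLIntegral_le_lintegral B _)
    rw [← ENNReal.ofReal_mul (by positivity)]
    refine ENNReal.ofReal_le_ofReal ?_
    rcases eq_or_ne x y with rfl | hxy
    · simp
    · have hd := dist_pos.2 hxy
      have hle : dist x y ≤ 2 * r := by
        have := dist_triangle_right x y (d i)
        have h1 := Metric.mem_ball.1 hxz
        have h2 := Metric.mem_ball.1 hy
        linarith
      rw [mul_div_assoc', le_div_iff₀ (by positivity), mul_comm]
      gcongr
  have hle_int : ENNReal.ofReal (V / 2 * ∫ x, w x ^ 2) ≤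
      ENNReal.ofReal (volume.real Ω * S + (2 * r) ^ a * (gagSq N s w).toReal) := by
    calc ENNReal.ofReal (V / 2 * ∫ x, w x ^ 2)
        = ∫⁻ x, ENNReal.ofReal (V / 2 * w x ^ 2) := by
          rw [← integral_const_mul, ofReal_integral_eq_lintegral_ofReal
            (hw2.integrable_sq.const_mul _) (ae_of_all _ fun _ => by positivity)]
      _ = ∫⁻ x in Ω, ENNReal.ofReal (V / 2 * w x ^ 2) := by
          rw [← lintegral_indicator hΩo.measurableSet]
          refine lintegral_congr_ae ?_
          filter_upwards [hw0] with x hx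
          by_cases h : x ∈ Ω
          · simp [h]
          · simp [h, hx h]
      _ ≤ ∫⁻ x in Ω, (ENNReal.ofReal S + ENNReal.ofReal ((2 * r) ^ a) *
            ∫⁻ y, ENNReal.ofReal ((w x - w y) ^ 2 / dist x y ^ a)) :=
          setLIntegral_mono' hΩo.measurableSet hpt
      _ ≤ ENNReal.ofReal S * volume Ω + ENNReal.ofReal ((2 * r) ^ a) * gagSq N s w := by
          rw [lintegral_add_left measurable_const, setLIntegral_const,
            lintegral_const_mul' _ _ ENNReal.ofReal_ne_top]
          gcongr
          exact setLIntegral_le_lintegral _ _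
      _ = _ := by
          rw [ENNReal.ofReal_add (by positivity) (by positivity),
            ENNReal.ofReal_mul (by positivity), ENNReal.ofReal_mul (by positivity),
            ENNReal.ofReal_toReal hg.ne, measureReal_def, ENNReal.ofReal_toReal hΩfin, mul_comm
            (volume Ω)]
  exact (ENNReal.ofReal_le_ofReal_iff (by positivity)).1 hle_int

/-! ### The admissible class inside `L²` -/

lemma gagSq_lt_top_of_memLp {N : ℕ} {s : ℝ} {u : E N → ℝ} (hu : Measurable u)
    (h : MemLp (gagQuot N s u) 2 (volume.prod volume)) : gagSq N s u < ⊤ := by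
  rw [← lintegral_gagQuot hu, ← hasFiniteIntegral_iff_ofReal (ae_of_all _ fun x => sq_nonneg _)]
  exact h.integrable_sq.2

lemma memA.memLp_gagQuot {N : ℕ} {s q : ℝ} {Ω : Set (E N)} {u : E N → ℝ} (h : memA N s q Ω u) :
    MemLp (gagQuot N s u) 2 (volume.prod volume) :=
  memLp_two_of_lintegral (measurable_gagQuot h.1) (by rw [lintegral_gagQuot h.1]; exact h.2.2.1)

lemma norm_gagQuot {N : ℕ} {s q : ℝ} {Ω : Set (E N)} {u : E N → ℝ} (h : memA N s q Ω u) :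
    ‖h.memLp_gagQuot.toLp _‖ ^ 2 = (gagSq N s u).toReal := by
  rw [norm_toLp_sq_lintegral, lintegral_gagQuot h.1]

/-- The bilinear form of the weak formulation is the `L²` inner product of Gagliardo quotients. -/
lemma form_eq {N : ℕ} {s q : ℝ} {Ω : Set (E N)} {u v : E N → ℝ} (h : memA N s q Ω u)
    (h' : memA N s q Ω v) :
    (∫ x : E N, ∫ y : E N, (u x - u y) * (v x - v y) / dist x y ^ ((N : ℝ) + 2 * s)) =
      inner ℝ (h.memLp_gagQuot.toLp _) (h'.memLp_gagQuot.toLp _) := by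
  have hi : Integrable (fun p => gagQuot N s u p * gagQuot N s v p) (volume.prod volume) :=
    h.memLp_gagQuot.integrable_mul h'.memLp_gagQuot
  rw [inner_toLp, integral_prod _ hi]
  simp only [gagQuot_mul]

lemma memA.memLp {N : ℕ} (hN : 1 ≤ N) {s q : ℝ} {Ω : Set (E N)}
    (hΩb : Bornology.IsBounded Ω) (hs : 0 < s) {u : E N → ℝ} (h : memA N s q Ω u) :
    MemLp u 2 volume := by
  obtain ⟨C, hC, hP⟩ := poincare hN hΩb hs
  exact memLp_two_of_lintegral h.1
    ((hP u h.1 h.2.1).trans_lt (ENNReal.mul_lt_top hC.lt_top h.2.2.1))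

lemma poincare_real {N : ℕ} (hN : 1 ≤ N) {s q : ℝ} {Ω : Set (E N)}
    (hΩb : Bornology.IsBounded Ω) (hs : 0 < s) :
    ∃ C, 0 ≤ C ∧ ∀ (u : E N → ℝ) (h : memA N s q Ω u),
      ‖(h.memLp hN hΩb hs).toLp u‖ ^ 2 ≤ C * (gagSq N s u).toReal := by
  obtain ⟨C, hC, hP⟩ := poincare hN hΩb hs
  refine ⟨C.toReal, ENNReal.toReal_nonneg, fun u h => ?_⟩
  rw [norm_toLp_sq_lintegral, ← ENNReal.toReal_mul]
  exact ENNReal.toReal_mono (ENNReal.mul_ne_top hC h.2.2.1.ne) (hP u h.1 h.2.1)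

/-- Integrability of `|u|^q` on `Ω` is automatic for `L²` functions, since `Ω` has finite measure. -/
lemma memA_mk {N : ℕ} {s q : ℝ} {Ω : Set (E N)}
    (hΩb : Bornology.IsBounded Ω) (hq : q ∈ Ioo (1 : ℝ) 2) {u : E N → ℝ} (hu : Measurable u)
    (h0 : ∀ᵐ x : E N, x ∉ Ω → u x = 0) (h2 : MemLp u 2 volume)
    (hD : MemLp (gagQuot N s u) 2 (volume.prod volume)) : memA N s q Ω u := by
  refine ⟨hu, h0, gagSq_lt_top_of_memLp hu hD, ?_⟩
  obtain ⟨C, hC, hb⟩ := rpow_le_sq hq.1 hq.2 one_pos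
  have : IsFiniteMeasure (volume.restrict Ω) := ⟨by simpa using hΩb.measure_lt_top⟩
  refine Integrable.mono' ((integrable_const C).add (h2.restrict Ω).integrable_sq)
    (Measurable.aestronglyMeasurable (by fun_prop)) (ae_of_all _ fun x => ?_)
  have := hb |u x| (abs_nonneg _)
  rw [Real.norm_of_nonneg (by positivity)]
  simpa using this

lemma memA.sub {N : ℕ} (hN : 1 ≤ N) {s q : ℝ} {Ω : Set (E N)}
    (hΩb : Bornology.IsBounded Ω) (hs : 0 < s) (hq : q ∈ Ioo (1 : ℝ) 2) {u v : E N → ℝ}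
    (h : memA N s q Ω u) (h' : memA N s q Ω v) : memA N s q Ω (u - v) := by
  refine memA_mk hΩb hq (h.1.sub h'.1) ?_ ((h.memLp hN hΩb hs).sub (h'.memLp hN hΩb hs)) ?_
  · filter_upwards [h.2.1, h'.2.1] with x hx hx' hxΩ
    simp [hx hxΩ, hx' hxΩ]
  · rw [gagQuot_sub]; exact h.memLp_gagQuot.sub h'.memLp_gagQuot

lemma setIntegral_abs_le {X : Type*} [MeasurableSpace X] {μ : Measure X} {B : Set X}
    (hB : MeasurableSet B) (hBf : μ B ≠ ⊤) :
    ∃ K, 0 ≤ K ∧ ∀ (f : X → ℝ) (hf : MemLp f 2 μ), ∫ x in B, |f x| ∂μ ≤ K * ‖hf.toLp f‖ := by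
  have h1 : MemLp (B.indicator fun _ => (1 : ℝ)) 2 μ := memLp_indicator_const 2 hB 1 (Or.inr hBf)
  refine ⟨‖h1.toLp _‖, norm_nonneg _, fun f hf => ?_⟩
  refine le_trans (le_of_eq ?_) (integral_abs_mul_le h1 hf)
  rw [← integral_indicator hB]
  congr 1; ext x
  by_cases hx : x ∈ B <;> simp [hx]

/-- Continuity of `u ↦ ∫_Ω |u|^{q-2} u ψ` with respect to the `L²` norm, with an explicit modulus. -/
lemma signedPow_est {N : ℕ} {q : ℝ} {Ω : Set (E N)} (hΩo : IsOpen Ω)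
    (hΩb : Bornology.IsBounded Ω) (hq : q ∈ Ioo (1 : ℝ) 2) :
    ∃ K, 0 ≤ K ∧ ∀ ε, 0 < ε → ∃ C, 0 ≤ C ∧ ∀ (u v ψ : E N → ℝ) (_ : Measurable u)
      (_ : Measurable v) (hu2 : MemLp u 2 volume) (hv2 : MemLp v 2 volume)
      (hψ : MemLp ψ 2 volume),
      |(∫ x in Ω, signedPow q (u x) * ψ x) - ∫ x in Ω, signedPow q (v x) * ψ x| ≤
        2 * (ε * K + C * ‖hu2.toLp u - hv2.toLp v‖) * ‖hψ.toLp ψ‖ := by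
  have hfin : volume Ω ≠ ⊤ := hΩb.measure_lt_top.ne
  have : IsFiniteMeasure (volume.restrict Ω) := ⟨by simpa using hfin.lt_top⟩
  obtain ⟨K, hK, hKb⟩ := setIntegral_abs_le (μ := volume) hΩo.measurableSet hfin
  refine ⟨K, hK, fun ε hε => ?_⟩
  have hb : ∀ ε, 0 < ε → ∃ C, 0 ≤ C ∧ ∀ a b : ℝ,
      |signedPow q a - signedPow q b| ≤ 2 * (ε + C * |a - b|) := by
    intro ε hε
    obtain ⟨C, hC, h⟩ := rpow_le_eps (by linarith [hq.1] : 0 < q - 1)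
      (by linarith [hq.2] : q - 1 < 1) hε
    refine ⟨C, hC, fun a b => (signedPow_holder hq.1 hq.2 a b).trans ?_⟩
    linarith [h _ (abs_nonneg (a - b))]
  have hPL : ∀ u : E N → ℝ, Measurable u → MemLp u 2 volume →
      MemLp (fun x => signedPow q (u x)) 2 (volume.restrict Ω) := by
    intro u hu hu2
    obtain ⟨C, hC, h⟩ := hb 1 one_pos
    have hg : MemLp (fun x => 2 * (1 + C * |u x|)) 2 (volume.restrict Ω) :=
      ((memLp_const (1 : ℝ)).add ((hu2.restrict Ω).abs.const_mul C)).const_mul 2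
    refine hg.of_le ((measurable_signedPow q).comp hu).aestronglyMeasurable (ae_of_all _ fun x => ?_)
    have := h (u x) 0
    have hP0 : signedPow q 0 = 0 := by simp [signedPow]
    rw [hP0, sub_zero, sub_zero] at this
    rw [Real.norm_eq_abs, Real.norm_of_nonneg (by positivity)]
    exact this
  obtain ⟨C, hC, h⟩ := hb ε hε
  refine ⟨C, hC, fun u v ψ hu hv hu2 hv2 hψ => ?_⟩
  have hψΩ := hψ.restrict Ω
  have hPi : ∀ k : E N → ℝ, Measurable k → MemLp k 2 volume →
      Integrable (fun x => signedPow q (k x) * ψ x) (volume.restrict Ω) :=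
    fun k hk hk2 => (hPL k hk hk2).integrable_mul hψΩ
  rw [← integral_sub (hPi u hu hu2) (hPi v hv hv2)]
  have hw2 := hu2.sub hv2
  have i1 : Integrable (fun x => |ψ x|) (volume.restrict Ω) :=
    (hψΩ.integrable one_le_two).abs
  have i2 : Integrable (fun x => |(u - v) x| * |ψ x|) volume :=
    hw2.abs.integrable_mul hψ.abs
  have e1 := hKb ψ hψ
  have e2 : ∫ x in Ω, |(u - v) x| * |ψ x| ≤ ‖hu2.toLp u - hv2.toLp v‖ * ‖hψ.toLp ψ‖ := by
    rw [← MemLp.toLp_sub]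
    exact (setIntegral_le_integral i2 (ae_of_all _ fun x => by positivity)).trans
      (integral_abs_mul_le hw2 hψ)
  calc |∫ x in Ω, (signedPow q (u x) * ψ x - signedPow q (v x) * ψ x)|
      ≤ ∫ x in Ω, (2 * ε * |ψ x| + 2 * C * (|(u - v) x| * |ψ x|)) := by
        rw [← Real.norm_eq_abs]
        refine norm_integral_le_of_norm_le
          ((i1.const_mul _).add (i2.restrict.const_mul _)) (ae_of_all _ fun x => ?_)
        rw [← sub_mul, Real.norm_eq_abs, abs_mul, Pi.sub_apply]
        have := mul_le_mul_of_nonneg_right (h (u x) (v x)) (abs_nonneg (ψ x))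
        linarith
    _ = 2 * ε * (∫ x in Ω, |ψ x|) + 2 * C * ∫ x in Ω, |(u - v) x| * |ψ x| := by
        rw [integral_add (i1.const_mul _) (i2.restrict.const_mul _), integral_const_mul,
          integral_const_mul]
    _ ≤ 2 * ε * (K * ‖hψ.toLp ψ‖) + 2 * C * (‖hu2.toLp u - hv2.toLp v‖ * ‖hψ.toLp ψ‖) := by
        gcongr
    _ = _ := by ring

/-! ### Compact embedding into `L²` -/

/-- The coefficient of the seminorm in `avg_est` with `r = 1 / (k + 1)` tends to `0`. -/
lemma coeff_tendsto {N : ℕ} {s : ℝ} (hs : 0 < s) :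
    Tendsto (fun k : ℕ => 2 / volume.real (Metric.ball (0 : E N) (1 / ((k : ℝ) + 1))) *
      (2 * (1 / ((k : ℝ) + 1))) ^ ((N : ℝ) + 2 * s)) atTop (𝓝 0) := by
  set V1 := volume.real (Metric.ball (0 : E N) 1) with hV1
  have hV1pos : 0 < V1 :=
    ENNReal.toReal_pos (Metric.measure_ball_pos _ _ one_pos).ne' measure_ball_lt_top.ne
  have h1 : Tendsto (fun k : ℕ => (1 / ((k : ℝ) + 1)) ^ (2 * s)) atTop (𝓝 0) := by
    have := (tendsto_one_div_add_atTop_nhds_zero_nat (𝕜 := ℝ)).rpow_const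
      (p := 2 * s) (Or.inr (by positivity))
    rwa [Real.zero_rpow (by positivity)] at this
  have h2 := h1.const_mul (2 / V1 * 2 ^ ((N : ℝ) + 2 * s))
  rw [mul_zero] at h2
  refine h2.congr fun k => ?_
  set r : ℝ := 1 / ((k : ℝ) + 1) with hr
  have hr0 : 0 < r := by positivity
  have hV : volume.real (Metric.ball (0 : E N) r) = r ^ N * V1 := by
    rw [measureReal_def, Measure.addHaar_ball_of_pos _ _ hr0, ENNReal.toReal_mul,
      ENNReal.toReal_ofReal (by positivity), finrank_euclideanSpace_fin]
    rfl
  rw [hV, Real.mul_rpow (by norm_num) hr0.le, Real.rpow_add hr0, Real.rpow_natCast]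
  field_simp

/-- Rellich-type compactness: a sequence bounded in `[·]_s` has an `L²`-Cauchy subsequence. The
subsequence is chosen so that the integrals over all balls of radius `1 / (k + 1)` centred at a
countable dense set converge; `avg_est` then applies to the differences. -/
lemma compact_L2 {N : ℕ} (hN : 1 ≤ N) {Ω : Set (E N)} (hΩo : IsOpen Ω)
    (hΩb : Bornology.IsBounded Ω) {s q : ℝ} (hs : 0 < s) (hq : q ∈ Ioo (1 : ℝ) 2)
    (u : ℕ → E N → ℝ) (hu : ∀ n, memA N s q Ω (u n)) (M : ℝ)
    (hM : ∀ n, (gagSq N s (u n)).toReal ≤ M) :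
    ∃ φ : ℕ → ℕ, StrictMono φ ∧
      CauchySeq fun n => ((hu (φ n)).memLp hN hΩb hs).toLp (u (φ n)) := by
  obtain ⟨C, hC, hP⟩ := poincare_real (q := q) hN hΩb hs
  set d := TopologicalSpace.denseSeq (E N) with hd
  set r : ℕ → ℝ := fun k => 1 / ((k : ℝ) + 1) with hr
  have hr0 : ∀ k, 0 < r k := fun k => by simp only [hr]; positivity
  set a : ℕ → ℕ × ℕ → ℝ := fun n p => ∫ x in Metric.ball (d p.1) (r p.2), u n x with ha
  have hL := fun n => (hu n).memLp hN hΩb hs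
  have hnorm : ∀ n, ‖(hL n).toLp (u n)‖ ≤ Real.sqrt (C * M) := fun n =>
    Real.le_sqrt_of_sq_le ((hP _ (hu n)).trans (mul_le_mul_of_nonneg_left (hM n) hC))
  have hbd : ∀ p : ℕ × ℕ, ∃ b : ℝ, ∀ n, a n p ∈ Icc (-b) b := by
    intro p
    obtain ⟨K, hK, hKb⟩ := setIntegral_abs_le (μ := (volume : Measure (E N)))
      (B := Metric.ball (d p.1) (r p.2))
      Metric.isOpen_ball.measurableSet measure_ball_lt_top.ne
    refine ⟨K * Real.sqrt (C * M), fun n => abs_le.1 ?_⟩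
    refine (abs_integral_le_integral_abs).trans ((hKb _ (hL n)).trans ?_)
    exact mul_le_mul_of_nonneg_left (hnorm n) hK
  choose b hb using hbd
  obtain ⟨A, -, φ, hφ, hA⟩ :=
    (isCompact_univ_pi fun p => isCompact_Icc (a := -b p) (b := b p)).tendsto_subseq
      (x := a) (fun n p _ => hb p n)
  refine ⟨φ, hφ, ?_⟩
  have hAp : ∀ p, Tendsto (fun n => a (φ n) p) atTop (𝓝 (A p)) := fun p =>
    (tendsto_pi_nhds.1 hA) p
  have hM0 : 0 ≤ M := ENNReal.toReal_nonneg.trans (hM 0)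
  set x := fun n => (hL (φ n)).toLp (u (φ n)) with hx
  have hsq : Tendsto (fun n : ℕ × ℕ => ‖x n.1 - x n.2‖ ^ 2) atTop (𝓝 0) := by
    rw [Metric.tendsto_nhds]
    intro ε hε
    have hcoef := (coeff_tendsto (N := N) hs).mul_const (4 * M)
    rw [zero_mul] at hcoef
    obtain ⟨k, hk⟩ := (hcoef.eventually (gt_mem_nhds (half_pos hε))).exists
    set V := volume.real (Metric.ball (0 : E N) (r k)) with hV
    have hVpos : 0 < V :=
      ENNReal.toReal_pos (Metric.measure_ball_pos _ _ (hr0 k)).ne' measure_ball_lt_top.ne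
    obtain ⟨t, ht⟩ := hΩb.isCompact_closure.elim_finite_subcover
      (fun i => Metric.ball (d i) (r k)) (fun _ => Metric.isOpen_ball) (fun y _ => by
        obtain ⟨i, hi⟩ := (TopologicalSpace.denseRange_denseSeq (E N)).exists_dist_lt y (hr0 k)
        exact mem_iUnion.2 ⟨i, Metric.mem_ball.2 hi⟩)
    have hsum : Tendsto (fun n : ℕ × ℕ => 2 / V * (volume.real Ω * ∑ i ∈ t, 2 / V *
        (a (φ n.1) (i, k) - a (φ n.2) (i, k)) ^ 2)) atTop (𝓝 0) := by
      have : Tendsto (fun n : ℕ × ℕ => 2 / V * (volume.real Ω * ∑ i ∈ t, 2 / V *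
        (a (φ n.1) (i, k) - a (φ n.2) (i, k)) ^ 2)) atTop
          (𝓝 (2 / V * (volume.real Ω * ∑ i ∈ t, 2 / V * (A (i, k) - A (i, k)) ^ 2))) := by
        refine (Tendsto.const_mul _ (Tendsto.const_mul _ (tendsto_finsetSum _ fun i _ => ?_)))
        rw [← prod_atTop_atTop_eq]
        exact ((((hAp _).comp tendsto_fst).sub ((hAp _).comp tendsto_snd)).pow 2).const_mul _
      simpa using this
    filter_upwards [hsum.eventually (gt_mem_nhds (half_pos hε))] with n hn
    rw [Real.dist_eq, sub_zero, abs_of_nonneg (sq_nonneg _)]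
    have hw := (hu (φ n.1)).sub hN hΩb hs hq (hu (φ n.2))
    have hw2 := (hL (φ n.1)).sub (hL (φ n.2))
    have hest := avg_est hΩo hΩb hs hw.1 hw2 hw.2.1 hw.2.2.1 (hr0 k) t d (subset_closure.trans ht)
    have hgw : (gagSq N s (u (φ n.1) - u (φ n.2))).toReal ≤ 4 * M := by
      rw [← norm_gagQuot hw]
      have e : hw.memLp_gagQuot.toLp _ = (hu (φ n.1)).memLp_gagQuot.toLp _ - (hu (φ n.2)).memLp_gagQuot.toLp _ := by
        rw [← MemLp.toLp_sub]
        exact MemLp.toLp_congr _ _ (by rw [gagQuot_sub])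
      have h1 := norm_gagQuot (hu (φ n.1))
      have h2 := norm_gagQuot (hu (φ n.2))
      have h3 := parallelogram_law_with_norm ℝ ((hu (φ n.1)).memLp_gagQuot.toLp _)
        ((hu (φ n.2)).memLp_gagQuot.toLp _)
      rw [e]
      have h4 := hM (φ n.1)
      have h5 := hM (φ n.2)
      have h6 := sq_nonneg ‖(hu (φ n.1)).memLp_gagQuot.toLp _ + (hu (φ n.2)).memLp_gagQuot.toLp _‖
      linarith
    have hnx : ‖x n.1 - x n.2‖ ^ 2 = ∫ y, (u (φ n.1) - u (φ n.2)) y ^ 2 := by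
      rw [← norm_toLp_sq hw2]; rfl
    rw [← hnx] at hest
    have hm : ∀ i, ∫ y in Metric.ball (d i) (r k), (u (φ n.1) - u (φ n.2)) y =
        a (φ n.1) (i, k) - a (φ n.2) (i, k) := by
      intro i
      have : IsFiniteMeasure (volume.restrict (Metric.ball (d i) (r k))) :=
        ⟨by simpa using measure_ball_lt_top⟩
      have hi : ∀ m, Integrable (u m) (volume.restrict (Metric.ball (d i) (r k))) := fun m =>
        ((hL m).restrict _).integrable one_le_two
      exact integral_sub (hi _) (hi _)
    simp only [hm] at hest
    have h7 : ‖x n.1 - x n.2‖ ^ 2 = 2 / V * (V / 2 * ‖x n.1 - x n.2‖ ^ 2) := by field_simp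
    rw [h7]
    refine (mul_le_mul_of_nonneg_left hest (by positivity)).trans_lt ?_
    rw [mul_add, ← mul_assoc _ (_ ^ _)]
    have h8 : 2 / V * (2 * r k) ^ ((N : ℝ) + 2 * s) *
        (gagSq N s (u (φ n.1) - u (φ n.2))).toReal ≤
        2 / V * (2 * r k) ^ ((N : ℝ) + 2 * s) * (4 * M) := by
      have := hr0 k
      gcongr
    linarith [hk, h8, hn]
  rw [cauchySeq_iff_tendsto_dist_atTop_0]
  have := hsq.sqrt
  simpa [dist_eq_norm, Real.sqrt_sq] using this

/-! ### Critical points and critical values -/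

lemma crit_inner {N : ℕ} {s q α : ℝ} {Ω : Set (E N)} {u ψ : E N → ℝ}
    (hu : IsCritPt N s q α Ω u) (hψ : memA N s q Ω ψ) :
    inner ℝ (hu.1.memLp_gagQuot.toLp _) (hψ.memLp_gagQuot.toLp _) = α * ∫ x in Ω, signedPow q (u x) * ψ x := by
  rw [← form_eq hu.1 hψ, hu.2 ψ hψ]
  rfl

/-- Testing the equation with `u` itself gives `[u]_s² = α ∫_Ω |u|^q`, so the energy of a critical point
is a negative multiple of its squared seminorm. -/
lemma crit_energy {N : ℕ} {s q α : ℝ} {Ω : Set (E N)} (hq : q ∈ Ioo (1 : ℝ) 2)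
    {u : E N → ℝ} (hu : IsCritPt N s q α Ω u) :
    EF N s q α Ω u = (1 / 2 - 1 / q) * (gagSq N s u).toReal := by
  have h := crit_inner hu hu.1
  rw [real_inner_self_eq_norm_sq, norm_gagQuot hu.1] at h
  simp only [abs_rpow_eq hq.1] at h
  have hq0 : q ≠ 0 := by linarith [hq.1]
  rw [EF, h]
  field_simp

/-- The subquadratic term is absorbed into half of the squared seminorm by the Poincaré inequality. -/
lemma EF_bddBelow {N : ℕ} (hN : 1 ≤ N) {Ω : Set (E N)}
    (hΩb : Bornology.IsBounded Ω) {s q α : ℝ} (hs : 0 < s) (hq : q ∈ Ioo (1 : ℝ) 2)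
    (hα : 0 < α) : BddBelow {c : ℝ | ∃ u, memA N s q Ω u ∧ EF N s q α Ω u = c} := by
  obtain ⟨C, hC, hP⟩ := poincare_real (q := q) hN hΩb hs
  have hq0 : 0 < q := by linarith [hq.1]
  obtain ⟨K, hK, hb⟩ := rpow_le_sq hq.1 hq.2
    (by positivity : 0 < q / (2 * α * (C + 1)))
  have : IsFiniteMeasure (volume.restrict Ω) := ⟨by simpa using hΩb.measure_lt_top⟩
  refine ⟨-(α / q * (K * volume.real Ω)), ?_⟩
  rintro c ⟨u, hu, rfl⟩
  have h2 := hu.memLp hN hΩb hs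
  have hle_int : ∫ x in Ω, |u x| ^ q ≤
      K * volume.real Ω + q / (2 * α * (C + 1)) * ∫ x, u x ^ 2 := by
    calc ∫ x in Ω, |u x| ^ q
        ≤ ∫ x in Ω, (K + q / (2 * α * (C + 1)) * u x ^ 2) := by
          refine integral_mono hu.2.2.2
            ((integrable_const _).add ((h2.restrict Ω).integrable_sq.const_mul _)) fun x => ?_
          simpa using hb |u x| (abs_nonneg _)
      _ = K * volume.real Ω + q / (2 * α * (C + 1)) * ∫ x in Ω, u x ^ 2 := by
          rw [integral_add (integrable_const _) ((h2.restrict Ω).integrable_sq.const_mul _),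
            integral_const_mul, setIntegral_const, smul_eq_mul, mul_comm]
      _ ≤ _ := by
          refine add_le_add le_rfl (mul_le_mul_of_nonneg_left ?_ (by positivity))
          exact setIntegral_le_integral h2.integrable_sq (ae_of_all _ fun x => sq_nonneg _)
  have hPu := hP u hu
  rw [norm_toLp_sq] at hPu
  set G := (gagSq N s u).toReal
  have hG : 0 ≤ G := ENNReal.toReal_nonneg
  have h3 : α / q * ∫ x in Ω, |u x| ^ q ≤ α / q * (K * volume.real Ω) + 1 / 2 * G := by
    refine (mul_le_mul_of_nonneg_left hle_int (by positivity)).trans ?_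
    rw [mul_add]
    have h4 : α / q * (q / (2 * α * (C + 1)) * ∫ x, u x ^ 2) =
        1 / 2 * ((∫ x, u x ^ 2) / (C + 1)) := by field_simp
    have h5 : (∫ x, u x ^ 2) / (C + 1) ≤ G := by
      rw [div_le_iff₀ (by positivity)]; linarith
    linarith
  rw [EF]
  linarith

/-- A limit of critical values is a critical value: the corresponding critical points converge strongly,
along a subsequence, to a critical point. -/
lemma critVals_closed {N : ℕ} (hN : 1 ≤ N) {Ω : Set (E N)} (hΩo : IsOpen Ω)
    (hΩb : Bornology.IsBounded Ω) {s q α : ℝ} (hs : 0 < s) (hq : q ∈ Ioo (1 : ℝ) 2) :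
    IsClosed {c : ℝ | IsCritVal N s q α Ω c} := by
  refine IsSeqClosed.isClosed fun c c₀ hc hc₀ => ?_
  choose u hu huc using hc
  have hκ : (1 / 2 - 1 / q : ℝ) ≠ 0 := by
    have : (1 : ℝ) / 2 < 1 / q :=
      one_div_lt_one_div_of_lt (by linarith [hq.1]) hq.2
    linarith
  have hg : ∀ n, (gagSq N s (u n)).toReal = c n / (1 / 2 - 1 / q) := fun n => by
    rw [← huc n, crit_energy hq (hu n), mul_div_cancel_left₀ _ hκ]
  obtain ⟨M, hM⟩ := (hc₀.div_const (1 / 2 - 1 / q)).bddAbove_range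
  have hgM : ∀ n, (gagSq N s (u n)).toReal ≤ M := fun n => by
    rw [hg n]; exact hM ⟨n, rfl⟩
  obtain ⟨φ, hφ, hX⟩ := compact_L2 hN hΩo hΩb hs hq u (fun n => (hu n).1) M hgM
  have hL := fun n => (hu (φ n)).1.memLp hN hΩb hs
  set x := fun n => (hL n).toLp (u (φ n)) with hx
  set y := fun n => (hu (φ n)).1.memLp_gagQuot.toLp (gagQuot N s (u (φ n))) with hy
  obtain ⟨K, hK, hest⟩ := signedPow_est hΩo hΩb hq
  -- Testing both equations with `u n - u m` makes the Gagliardo quotients Cauchy.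
  have hY : CauchySeq y := by
    obtain ⟨C, hC, hest1⟩ := hest 1 one_pos
    rw [cauchySeq_iff_tendsto_dist_atTop_0] at hX ⊢
    have hbound : ∀ n : ℕ × ℕ, ‖y n.1 - y n.2‖ ^ 2 ≤ |α| *
        (2 * (1 * K + C * dist (x n.1) (x n.2)) * dist (x n.1) (x n.2)) := by
      intro n
      have hw := (hu (φ n.1)).1.sub hN hΩb hs hq (hu (φ n.2)).1
      have e : hw.memLp_gagQuot.toLp _ = y n.1 - y n.2 := by
        rw [hy, ← MemLp.toLp_sub]
        exact MemLp.toLp_congr _ _ (by rw [gagQuot_sub])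
      have h1 := crit_inner (hu (φ n.1)) hw
      have h2 := crit_inner (hu (φ n.2)) hw
      rw [e] at h1 h2
      have h3 := hest1 _ _ _ (hu (φ n.1)).1.1 (hu (φ n.2)).1.1 (hL n.1) (hL n.2)
        ((hL n.1).sub (hL n.2))
      rw [MemLp.toLp_sub (hL n.1) (hL n.2)] at h3
      rw [← real_inner_self_eq_norm_sq]
      calc inner ℝ (y n.1 - y n.2) (y n.1 - y n.2)
          = inner ℝ (y n.1) (y n.1 - y n.2) - inner ℝ (y n.2) (y n.1 - y n.2) := by
            rw [← inner_sub_left]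
        _ ≤ |inner ℝ (y n.1) (y n.1 - y n.2) - inner ℝ (y n.2) (y n.1 - y n.2)| := le_abs_self _
        _ ≤ _ := by
            rw [h1, h2, ← mul_sub, abs_mul, dist_eq_norm]
            exact mul_le_mul_of_nonneg_left h3 (abs_nonneg _)
    have hlim : Tendsto (fun n : ℕ × ℕ => |α| *
        (2 * (1 * K + C * dist (x n.1) (x n.2)) * dist (x n.1) (x n.2))) atTop (𝓝 0) := by
      have := ((((hX.const_mul C).const_add (1 * K)).const_mul 2).mul hX).const_mul |α|
      simpa using this
    have hsq := squeeze_zero (fun n => sq_nonneg _) hbound hlim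
    have := hsq.sqrt
    simpa [dist_eq_norm, Real.sqrt_sq] using this
  obtain ⟨X, hxX⟩ := cauchySeq_tendsto_of_complete hX
  obtain ⟨Y, hyY⟩ := cauchySeq_tendsto_of_complete hY
  -- Along a common subsequence both limits are a.e. limits, which identifies `Y` as the
  -- Gagliardo quotient of `X`.
  obtain ⟨θ, hθ, hae⟩ := (tendstoInMeasure_of_tendsto_Lp hxX).exists_seq_tendsto_ae
  obtain ⟨η, hη, hae'⟩ := (tendstoInMeasure_of_tendsto_Lp
    (hyY.comp hθ.tendsto_atTop)).exists_seq_tendsto_ae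
  set v : E N → ℝ := ⇑X with hv
  have hvm : Measurable v := (Lp.stronglyMeasurable X).measurable
  have hvL : MemLp v 2 volume := Lp.memLp X
  have hxae : ∀ᵐ z : E N, Tendsto (fun n => u (φ (θ n)) z) atTop (𝓝 (v z)) := by
    have h1 : ∀ᵐ z : E N, ∀ n, x n z = u (φ n) z := ae_all_iff.2 fun n => (hL n).coeFn_toLp
    filter_upwards [hae, h1] with z hz hz1
    exact hz.congr fun n => hz1 _
  have hv0 : ∀ᵐ z : E N, z ∉ Ω → v z = 0 := by
    have h1 : ∀ᵐ z : E N, ∀ n, z ∉ Ω → u n z = 0 := ae_all_iff.2 fun n => (hu n).1.2.1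
    filter_upwards [hxae, h1] with z hz hz1 hzΩ
    refine tendsto_nhds_unique hz ?_
    simp only [hz1 _ hzΩ]
    exact tendsto_const_nhds
  have hYD : ⇑Y =ᵐ[volume.prod volume] gagQuot N s v := by
    have h1 : ∀ᵐ p ∂(volume.prod volume : Measure (E N × E N)), ∀ n, y n p = gagQuot N s (u (φ n)) p :=
      ae_all_iff.2 fun n => (hu (φ n)).1.memLp_gagQuot.coeFn_toLp
    have h2 := Measure.quasiMeasurePreserving_fst (μ := (volume : Measure (E N)))
      (ν := (volume : Measure (E N))) |>.ae hxae
    have h3 := Measure.quasiMeasurePreserving_snd (μ := (volume : Measure (E N)))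
      (ν := (volume : Measure (E N))) |>.ae hxae
    filter_upwards [hae', h1, h2, h3] with p hp hp1 hp2 hp3
    refine tendsto_nhds_unique hp ?_
    have h4 : Tendsto (fun n => gagQuot N s (u (φ (θ n))) p) atTop (𝓝 (gagQuot N s v p)) :=
      (hp2.sub hp3).div_const _
    exact (h4.comp hη.tendsto_atTop).congr fun n => (hp1 _).symm
  have hvD : MemLp (gagQuot N s v) 2 (volume.prod volume) := (memLp_congr_ae hYD).1 (Lp.memLp Y)
  have hvA : memA N s q Ω v := memA_mk hΩb hq hvm hv0 hvL hvD
  have hXv : hvL.toLp v = X := Lp.toLp_coeFn X hvL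
  have hYv : hvA.memLp_gagQuot.toLp (gagQuot N s v) = Y := by
    rw [← Lp.toLp_coeFn Y (Lp.memLp Y)]
    exact MemLp.toLp_congr _ _ hYD.symm
  have hcrit : IsCritPt N s q α Ω v := by
    refine ⟨hvA, fun ψ hψ => ?_⟩
    have hψL := hψ.memLp hN hΩb hs
    rw [form_eq hvA hψ, hYv]
    have l1 : Tendsto (fun n => inner ℝ (y n) (hψ.memLp_gagQuot.toLp _)) atTop
        (𝓝 (inner ℝ Y (hψ.memLp_gagQuot.toLp _))) := hyY.inner tendsto_const_nhds
    have l2 : Tendsto (fun n => ∫ z in Ω, signedPow q (u (φ n) z) * ψ z) atTop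
        (𝓝 (∫ z in Ω, signedPow q (v z) * ψ z)) := by
      rw [Metric.tendsto_nhds]
      intro ε hε
      set T := ‖hψL.toLp ψ‖ with hT
      have hT0 : 0 ≤ T := norm_nonneg _
      obtain ⟨C, hC, hest1⟩ := hest (ε / (4 * (K * T + 1))) (by positivity)
      have l3 : Tendsto (fun n => 2 * (C * ‖x n - X‖) * T) atTop (𝓝 0) := by
        have := (((tendsto_iff_norm_sub_tendsto_zero.1 hxX).const_mul C).const_mul 2).mul_const T
        simpa using this
      filter_upwards [l3.eventually (gt_mem_nhds (half_pos hε))] with n hn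
      have h1 := hest1 _ _ _ (hu (φ n)).1.1 hvm (hL n) hvL hψL
      rw [hXv] at h1
      rw [Real.dist_eq]
      refine h1.trans_lt ?_
      have h2 : 2 * (ε / (4 * (K * T + 1)) * K) * T ≤ ε / 2 := by
        have : 2 * (ε / (4 * (K * T + 1)) * K) * T = ε / 2 * (K * T / (K * T + 1)) := by
          field_simp; ring
        rw [this]
        have : K * T / (K * T + 1) ≤ 1 := by
          rw [div_le_one (by positivity)]; linarith
        nlinarith
      calc _ = 2 * (ε / (4 * (K * T + 1)) * K) * T + 2 * (C * ‖x n - X‖) * T := by ring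
        _ < ε := by linarith
    have l4 : Tendsto (fun n => inner ℝ (y n) (hψ.memLp_gagQuot.toLp _)) atTop
        (𝓝 (α * ∫ z in Ω, signedPow q (v z) * ψ z)) :=
      (l2.const_mul α).congr fun n => (crit_inner (hu (φ n)) hψ).symm
    exact tendsto_nhds_unique l1 l4
  refine ⟨v, hcrit, ?_⟩
  rw [crit_energy hq hcrit, ← norm_gagQuot hvA, hYv]
  have l5 : Tendsto (fun n => (1 / 2 - 1 / q) * ‖y n‖ ^ 2) atTop
      (𝓝 ((1 / 2 - 1 / q) * ‖Y‖ ^ 2)) := (hyY.norm.pow 2).const_mul _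
  refine tendsto_nhds_unique l5 ((hc₀.comp hφ.tendsto_atTop).congr fun n => ?_)
  rw [Function.comp_apply, ← huc, crit_energy hq (hu (φ n)), norm_gagQuot (hu (φ n)).1]

/-- The critical values of `F` form a compact subset of `[Λ₁, 0]`. -/
theorem critVals_compact (N : ℕ) (hN : 1 ≤ N) (Ω : Set (E N)) (hΩo : IsOpen Ω)
    (hΩb : Bornology.IsBounded Ω) (hΩn : Ω.Nonempty)
    (s q α : ℝ) (hs : s ∈ Set.Ioo (0:ℝ) 1) (hq : q ∈ Set.Ioo (1:ℝ) 2) (hα : 0 < α) :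
    IsCompact {c : ℝ | IsCritVal N s q α Ω c} ∧
    {c : ℝ | IsCritVal N s q α Ω c} ⊆ Set.Icc (Lam1 N s q α Ω) 0 := by
  have hsub : {c : ℝ | IsCritVal N s q α Ω c} ⊆ Set.Icc (Lam1 N s q α Ω) 0 := by
    rintro c ⟨u, hu, rfl⟩
    refine ⟨csInf_le (EF_bddBelow hN hΩb hs.1 hq hα) ⟨u, hu.1, rfl⟩, ?_⟩
    rw [crit_energy hq hu]
    have h1 : (1 : ℝ) / 2 < 1 / q := one_div_lt_one_div_of_lt (by linarith [hq.1]) hq.2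
    exact mul_nonpos_of_nonpos_of_nonneg (by linarith) ENNReal.toReal_nonneg
  exact ⟨isCompact_Icc.of_isClosed_subset (critVals_closed hN hΩo hΩb hs.1 hq) hsub, hsub⟩
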